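/- Let (τ_L)_{L≥2} be nonnegative reals with τ_L → 0, X and Y_L independent centred Gaussians of variance 1 and τ_L², and a_L > 0 defined by P(X > a_L) = L^{−d}. For C, L > 0 set I_L(C) := [a_L/√(1+τ_L²) − C·max(1/a_L, τ_L), a_L/√(1+τ_L²) + C·max(1/a_L, τ_L)]. Then for every s ∈ ℝ: (i) limsup_{C→∞} limsup_{L→∞} L^d · P(X + Y_L ≥ a_L√(1+τ_L²) + s/a_L and X ∉ I_L(C)) = 0; (ii) consequently, for any sequence (θ_L) of positive reals with max(a_L τ_L², 1/a_L)/θ_L → 0, one has L^d · P(X + Y_L ≥ a_L√(1+τ_L²) + s/a_L and |X − a_L| > θ_L) → 0 as L → ∞. -/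

import Mathlib

open MeasureTheory ProbabilityTheory Filter
open scoped ENNReal NNReal

noncomputable section

/-- The interval `I_L(C)` of Lemma 2.3. -/
def gaussiantailInterval (τ : ℕ → ℝ) (a : ℕ → ℝ) (C : ℝ) (L : ℕ) : Set ℝ :=
  Set.Icc (a L / Real.sqrt (1 + τ L ^ 2) - C * max (1 / a L) (τ L))
    (a L / Real.sqrt (1 + τ L ^ 2) + C * max (1 / a L) (τ L))

lemma gstl_shift_le (A : Set ℝ) (hA : MeasurableSet A) (h c : ℝ)
    (hc : ∀ x ∈ A, -(x * h) - h ^ 2 / 2 ≤ c) :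
    gaussianReal 0 1 ((fun y => y - h) ⁻¹' A) ≤
      ENNReal.ofReal (Real.exp c) * gaussianReal 0 1 A := by
  have hm : (gaussianReal 0 1).map (fun y => y - h) = gaussianReal (-h) 1 := by
    rw [gaussianReal_map_sub_const]; simp
  rw [← Measure.map_apply (by fun_prop) hA, hm, gaussianReal_apply _ one_ne_zero,
    gaussianReal_apply _ one_ne_zero, ← lintegral_const_mul _ (measurable_gaussianPDF _ _)]
  refine setLIntegral_mono ((measurable_gaussianPDF _ _).const_mul _) fun x hx => ?_
  rw [gaussianPDF, gaussianPDF, ← ENNReal.ofReal_mul (Real.exp_pos _).le]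
  refine ENNReal.ofReal_le_ofReal ?_
  simp only [gaussianPDFReal, NNReal.coe_one, mul_one, sub_zero]
  rw [mul_left_comm, ← Real.exp_add]
  gcongr
  nlinarith [hc x hx]

/-- upper tail at `a + h`. -/
lemma gstl_tail_le (a h : ℝ) (hh : 0 ≤ h) :
    gaussianReal 0 1 (Set.Ioi (a + h)) ≤
      ENNReal.ofReal (Real.exp (-(a * h))) * gaussianReal 0 1 (Set.Ioi a) := by
  have := gstl_shift_le (Set.Ioi a) measurableSet_Ioi h (-(a * h)) (fun x hx => by
    have : a < x := hx
    nlinarith [mul_nonneg hh (sub_nonneg.2 this.le), sq_nonneg h])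
  convert this using 2
  ext y; simp [lt_sub_iff_add_lt]

lemma gstl_tail_ge (a K : ℝ) (ha : 1 ≤ a) (hK : 0 ≤ K) (haK : 2 * K ≤ a ^ 2) :
    gaussianReal 0 1 (Set.Ici (a - K / a)) ≤
      2 * ENNReal.ofReal (Real.exp (3 * K)) * gaussianReal 0 1 (Set.Ioi a) := by
  have ha0 : 0 < a := by linarith
  haveI : NullSingletonClass (gaussianReal 0 1) := nullSingletonClass_gaussianReal one_ne_zero
  rw [← measure_congr (Ioi_ae_eq_Ici (μ := gaussianReal 0 1))]
  set b := a - K / a with hb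
  set δ := 2 / a with hδ
  have hδ0 : 0 < δ := by positivity
  have h1 : gaussianReal 0 1 (Set.Ioi b) ≤
      gaussianReal 0 1 (Set.Ioc b (b + δ)) + gaussianReal 0 1 (Set.Ioi (b + δ)) := by
    rw [← Set.Ioc_union_Ioi_eq_Ioi (show b ≤ b + δ by linarith)]
    exact measure_union_le _ _
  have hbd : 1 ≤ b * δ := by
    have : b * δ = 2 - 2 * K / a ^ 2 := by rw [hb, hδ]; field_simp
    rw [this]
    have : 2 * K / a ^ 2 ≤ 1 := by rw [div_le_one (by positivity)]; exact haK
    linarith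
  have h2 : gaussianReal 0 1 (Set.Ioi (b + δ)) ≤ gaussianReal 0 1 (Set.Ioi b) / 2 := by
    refine (gstl_tail_le b δ hδ0.le).trans ?_
    rw [div_eq_mul_inv, mul_comm]
    gcongr
    have : (2 : ℝ≥0∞)⁻¹ = ENNReal.ofReal (2⁻¹) := by
      rw [ENNReal.ofReal_inv_of_pos (by norm_num)]; simp
    rw [this]
    refine ENNReal.ofReal_le_ofReal ?_
    rw [Real.exp_neg]
    have := Real.add_one_le_exp (b * δ)
    gcongr
    linarith
  have h3 : gaussianReal 0 1 (Set.Ioc b (b + δ)) ≤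
      ENNReal.ofReal (Real.exp (3 * K)) * gaussianReal 0 1 (Set.Ioi a) := by
    have := gstl_shift_le (Set.Ioc a (a + δ)) measurableSet_Ioc (-(K / a)) (3 * K) (fun x hx => by
      have hx2 : x ≤ a + δ := hx.2
      have h4 : x * (K / a) ≤ (a + δ) * (K / a) := by gcongr
      have h5 : (a + δ) * (K / a) = K + 2 * K / a ^ 2 := by rw [hδ]; field_simp
      have h6 : 2 * K / a ^ 2 ≤ 2 * K := div_le_self (by positivity) (by nlinarith)
      nlinarith [sq_nonneg (K / a)])
    refine le_trans (le_of_eq ?_) (this.trans ?_)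
    · congr 1
      ext y
      simp only [Set.mem_Ioc, Set.mem_preimage, hb]
      constructor <;> rintro ⟨h, h'⟩ <;> constructor <;> linarith
    · gcongr
      exact Set.Ioc_subset_Ioi_self
  have h4 : gaussianReal 0 1 (Set.Ioi b) / 2 ≤
      ENNReal.ofReal (Real.exp (3 * K)) * gaussianReal 0 1 (Set.Ioi a) := by
    have hfin : gaussianReal 0 1 (Set.Ioi b) / 2 ≠ ∞ :=
      ENNReal.div_ne_top (measure_ne_top _ _) (by norm_num)
    refine (ENNReal.add_le_add_iff_right hfin).1 ?_
    rw [ENNReal.add_halves]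
    exact h1.trans (add_le_add h3 h2)
  calc gaussianReal 0 1 (Set.Ioi b) = 2 * (gaussianReal 0 1 (Set.Ioi b) / 2) := by
        rw [ENNReal.mul_div_cancel (by norm_num) (by norm_num)]
    _ ≤ _ := by rw [mul_assoc]; gcongr

/-- Rotation. -/
lemma gstl_rot (t : ℝ) (S : Set (ℝ × ℝ)) (hS : MeasurableSet S) :
    ((gaussianReal 0 1).prod (gaussianReal 0 (Real.toNNReal (t ^ 2)))) S =
      ((gaussianReal 0 1).prod (gaussianReal 0 1))
        {q : ℝ × ℝ | (q.1 / Real.sqrt (1 + t ^ 2) - t / Real.sqrt (1 + t ^ 2) * q.2,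
          t * (t / Real.sqrt (1 + t ^ 2) * q.1 + q.2 / Real.sqrt (1 + t ^ 2))) ∈ S} := by
  have h1 : gaussianReal 0 (Real.toNNReal (t ^ 2)) = (gaussianReal 0 1).map (fun x => t * x) := by
    rw [gaussianReal_map_const_mul]
    congr 1
    · simp
    · ext; simp [sq_nonneg]
  have h2 : (gaussianReal 0 1).prod (gaussianReal 0 (Real.toNNReal (t ^ 2))) =
      ((gaussianReal 0 1).prod (gaussianReal 0 1)).map (Prod.map id (fun x => t * x)) := by
    rw [h1, ← Measure.map_prod_map _ _ measurable_id (by fun_prop), Measure.map_id]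
  have h3 := IsGaussian.map_rotation_eq_self (μ := gaussianReal 0 1)
    (by simp) (-Real.arctan t)
  rw [h2, ← h3, Measure.map_map (by fun_prop) (by fun_prop), Measure.map_apply (by fun_prop) hS, h3]
  congr 1
  ext q
  simp only [Set.mem_preimage, Function.comp, ContinuousLinearMap.rotation_apply, Prod.map,
    Real.cos_neg, Real.sin_neg, Real.cos_arctan, Real.sin_arctan, id, smul_eq_mul, Set.mem_setOf_eq]
  have e : ((1 / √(1 + t ^ 2) * q.1 + -(t / √(1 + t ^ 2)) * q.2,
      t * (- -(t / √(1 + t ^ 2)) * q.1 + 1 / √(1 + t ^ 2) * q.2)) : ℝ × ℝ) =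
      (q.1 / Real.sqrt (1 + t ^ 2) - t / Real.sqrt (1 + t ^ 2) * q.2,
          t * (t / Real.sqrt (1 + t ^ 2) * q.1 + q.2 / Real.sqrt (1 + t ^ 2))) := by
    refine Prod.ext ?_ ?_ <;> dsimp only <;> ring
  rw [e]

lemma gstl_core (t a s C : ℝ) (ht : 0 ≤ t) (ha : 1 ≤ a) (hC : 2 * |s| ≤ C)
    (has : 2 * |s| ≤ a ^ 2) :
    ((gaussianReal 0 1).prod (gaussianReal 0 (Real.toNNReal (t ^ 2))))
      {p : ℝ × ℝ | a * Real.sqrt (1 + t ^ 2) + s / a ≤ p.1 + p.2 ∧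
        p.1 ∉ Set.Icc (a / Real.sqrt (1 + t ^ 2) - C * max (1 / a) t)
          (a / Real.sqrt (1 + t ^ 2) + C * max (1 / a) t)} ≤
    (ENNReal.ofReal (Real.exp (-(C / 2))) + 2 * ENNReal.ofReal (Real.exp (3 * |s|)) *
      gaussianReal 0 1 {w | C / 2 < |w|}) * gaussianReal 0 1 (Set.Ioi a) := by
  have ha0 : 0 < a := by linarith
  have hC0 : 0 ≤ C := le_trans (by positivity) hC
  set r := Real.sqrt (1 + t ^ 2) with hr
  have hr1 : 1 ≤ r := Real.one_le_sqrt.2 (by nlinarith [sq_nonneg t])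
  have hr0 : 0 < r := by linarith
  have hr2 : r ^ 2 = 1 + t ^ 2 := Real.sq_sqrt (by positivity)
  have hmeas : MeasurableSet {p : ℝ × ℝ | a * r + s / a ≤ p.1 + p.2 ∧
        p.1 ∉ Set.Icc (a / r - C * max (1 / a) t) (a / r + C * max (1 / a) t)} := by
    have m1 : MeasurableSet {p : ℝ × ℝ | a * r + s / a ≤ p.1 + p.2} :=
      measurableSet_le (by fun_prop) (by fun_prop)
    exact m1.inter (measurable_fst measurableSet_Icc).compl
  rw [gstl_rot t _ hmeas]
  refine (measure_mono (t := (Set.Ioi (a + C / 2 / a)) ×ˢ Set.univ ∪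
    (Set.Ici (a - |s| / a)) ×ˢ {w | C / 2 < |w|}) ?_).trans ?_
  · rintro ⟨z, w⟩ ⟨h1, h2⟩
    simp only at h1 h2
    rw [← hr] at h1 h2
    have hz : z / r - t / r * w + t * (t / r * z + w / r) = r * z := by
      field_simp
      rw [hr2]; ring
    rw [hz] at h1
    have hz1 : a - |s| / a ≤ z := by
      have e1 : -(|s| / a) ≤ s / a := by
        rw [← neg_div]; gcongr; exact neg_abs_le s
      have e2 : |s| / a ≤ r * (|s| / a) := le_mul_of_one_le_left (by positivity) hr1
      refine le_of_mul_le_mul_left ?_ hr0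
      nlinarith
    by_cases hw : C / 2 < |w|
    · exact Or.inr ⟨hz1, hw⟩
    · refine Or.inl ⟨?_, trivial⟩
      by_contra hz2
      simp only [Set.mem_Ioi, not_lt] at hz2 hw
      refine h2 ?_
      have e1 : |s| / a ≤ C / 2 / a := by gcongr; linarith
      have e3 : |(z - a) / r - t / r * w| ≤ C * max (1 / a) t := by
        have f1 : |(z - a) / r| ≤ C / 2 * (1 / a) := by
          rw [abs_div, abs_of_pos hr0]
          refine (div_le_self (abs_nonneg _) hr1).trans ?_
          rw [mul_one_div, abs_le]; constructor <;> linarith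
        have f2 : |t / r * w| ≤ C / 2 * t := by
          rw [abs_mul, abs_of_nonneg (by positivity), mul_comm]
          exact mul_le_mul hw (div_le_self ht hr1) (by positivity) (by positivity)
        have f3 : C / 2 * (1 / a) ≤ C / 2 * max (1 / a) t := by gcongr; exact le_max_left _ _
        have f4 : C / 2 * t ≤ C / 2 * max (1 / a) t := by gcongr; exact le_max_right _ _
        have := abs_sub ((z - a) / r) (t / r * w)
        linarith
      have e4 : z / r - t / r * w = a / r + ((z - a) / r - t / r * w) := by ring
      rw [abs_le] at e3
      rw [e4]
      constructor <;> linarith [e3.1, e3.2]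
  · refine (measure_union_le _ _).trans ?_
    rw [Measure.prod_prod, Measure.prod_prod, measure_univ, mul_one, add_mul]
    refine add_le_add ?_ ?_
    · refine (gstl_tail_le a (C / 2 / a) (by positivity)).trans (le_of_eq ?_)
      congr 4
      field_simp
    · refine (mul_le_mul_left (gstl_tail_ge a |s| ha (abs_nonneg _) has) _).trans (le_of_eq ?_)
      ring

lemma gstl_bound_tendsto (s : ℝ) :
    Tendsto (fun C : ℝ => ENNReal.ofReal (Real.exp (-(C / 2))) +
      2 * ENNReal.ofReal (Real.exp (3 * |s|)) * gaussianReal 0 1 {w | C / 2 < |w|})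
      atTop (nhds 0) := by
  have hC : Tendsto (fun C : ℝ => C / 2) atTop atTop := tendsto_id.atTop_div_const (by norm_num)
  have h1 : Tendsto (fun C : ℝ => ENNReal.ofReal (Real.exp (-(C / 2)))) atTop (nhds 0) := by
    have := ENNReal.tendsto_ofReal (Real.tendsto_exp_neg_atTop_nhds_zero.comp hC)
    simpa using this
  have h2 : Tendsto (fun C : ℝ => gaussianReal 0 1 {w | C < |w|}) atTop (nhds 0) := by
    have := tendsto_measure_iInter_atTop (μ := gaussianReal 0 1) (s := fun C : ℝ => {w : ℝ | C < |w|})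
      (fun C => (measurableSet_lt (by fun_prop) (by fun_prop)).nullMeasurableSet)
      (fun C D h w hw => lt_of_le_of_lt h hw) ⟨0, measure_ne_top _ _⟩
    have he : (⋂ C : ℝ, {w : ℝ | C < |w|}) = ∅ := by
      ext w
      simp only [Set.mem_iInter, Set.mem_setOf_eq, Set.mem_empty_iff_false, iff_false, not_forall]
      exact ⟨|w|, lt_irrefl _⟩
    rw [he, measure_empty] at this
    exact this
  have h3 := ENNReal.Tendsto.const_mul (a := 2 * ENNReal.ofReal (Real.exp (3 * |s|)))
    (h2.comp hC) (Or.inr (ENNReal.mul_ne_top (by norm_num) ENNReal.ofReal_ne_top))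
  have := h1.add h3
  simpa using this

lemma gstl_a_tendsto (d : ℕ) (hd : 1 ≤ d) (a : ℕ → ℝ)
    (ha_def : ∀ L : ℕ, 2 ≤ L →
      gaussianReal 0 1 (Set.Ioi (a L)) = ENNReal.ofReal (1 / (L : ℝ) ^ d)) :
    Tendsto a atTop atTop := by
  refine tendsto_atTop.2 fun M => ?_
  have hpos : 0 < gaussianReal 0 1 (Set.Ioi M) := by
    rw [pos_iff_ne_zero]
    intro h
    have := gaussianReal_absolutelyContinuous' 0 one_ne_zero h
    simp at this
  have ht : Tendsto (fun L : ℕ => ENNReal.ofReal (1 / (L : ℝ) ^ d)) atTop (nhds 0) := by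
    have : Tendsto (fun L : ℕ => 1 / (L : ℝ) ^ d) atTop (nhds 0) :=
      Tendsto.const_div_atTop
        ((tendsto_pow_atTop (by omega)).comp tendsto_natCast_atTop_atTop) 1
    simpa using ENNReal.tendsto_ofReal this
  filter_upwards [ht.eventually (gt_mem_nhds hpos), eventually_ge_atTop 2] with L h1 h2
  by_contra hlt
  rw [← ha_def L h2] at h1
  exact absurd (measure_mono (Set.Ioi_subset_Ioi (not_le.1 hlt).le)) (not_le.2 h1)

lemma gstl_norm (d L : ℕ) (hL : 2 ≤ L) (x : ℝ≥0∞) :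
    (L : ℝ≥0∞) ^ d * (x * ENNReal.ofReal (1 / (L : ℝ) ^ d)) = x := by
  have hL0 : (0 : ℝ) < (L : ℝ) ^ d := by
    have : (0 : ℝ) < L := by exact_mod_cast (by omega : 0 < L)
    positivity
  have : (L : ℝ≥0∞) ^ d = ENNReal.ofReal ((L : ℝ) ^ d) := by
    rw [ENNReal.ofReal_pow (by positivity), ENNReal.ofReal_natCast]
  rw [this, mul_left_comm, ← ENNReal.ofReal_mul hL0.le, mul_one_div_cancel hL0.ne']
  simp

/-- Lemma 2.3, second part.
With `X, Y_L` independent centred Gaussians of variance `1` and `τ_L²`, `τ_L → 0`, and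
`a_L` defined by `P(X > a_L) = L^{−d}`: (i) for every `s`,
`limsup_{C→∞} limsup_{L→∞} L^d · P(X + Y_L ≥ a_L√(1+τ_L²) + s/a_L ; X ∉ I_L(C)) = 0`;
(ii) consequently, for every sequence `θ_L > 0` with `max(a_L τ_L², 1/a_L) ≪ θ_L`,
`L^d · P(X + Y_L ≥ a_L√(1+τ_L²) + s/a_L ; |X − a_L| > θ_L) → 0`. -/
theorem gaussian_sum_tail_localisation
    (d : ℕ) (hd : 1 ≤ d)
    (τ : ℕ → ℝ) (hτ_nonneg : ∀ L, 0 ≤ τ L)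
    (hτ : Tendsto τ atTop (nhds 0))
    (a : ℕ → ℝ) (ha_pos : ∀ L : ℕ, 2 ≤ L → 0 < a L)
    (ha_def : ∀ L : ℕ, 2 ≤ L →
      gaussianReal 0 1 (Set.Ioi (a L)) = ENNReal.ofReal (1 / (L : ℝ) ^ d))
    (s : ℝ) :
    (limsup
      (fun C : ℝ => limsup
        (fun L : ℕ =>
          (L : ℝ≥0∞) ^ d *
            ((gaussianReal 0 1).prod (gaussianReal 0 (Real.toNNReal (τ L ^ 2))))
              {p : ℝ × ℝ | a L * Real.sqrt (1 + τ L ^ 2) + s / a L ≤ p.1 + p.2 ∧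
                p.1 ∉ gaussiantailInterval τ a C L})
        atTop)
      atTop = 0) ∧
    ∀ θ : ℕ → ℝ, (∀ L, 0 < θ L) →
      Tendsto (fun L => max (a L * τ L ^ 2) (1 / a L) / θ L) atTop (nhds 0) →
      Tendsto
        (fun L : ℕ =>
          (L : ℝ≥0∞) ^ d *
            ((gaussianReal 0 1).prod (gaussianReal 0 (Real.toNNReal (τ L ^ 2))))
              {p : ℝ × ℝ | a L * Real.sqrt (1 + τ L ^ 2) + s / a L ≤ p.1 + p.2 ∧
                θ L < |p.1 - a L|})
        atTop (nhds 0) := by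
  have hat := gstl_a_tendsto d hd a ha_def
  have hlarge : ∀ᶠ L in atTop, 2 ≤ L ∧ 1 ≤ a L ∧ 2 * |s| ≤ a L ^ 2 := by
    filter_upwards [eventually_ge_atTop 2, hat.eventually_ge_atTop 1,
      hat.eventually_ge_atTop (2 * |s|)] with L h1 h2 h3
    exact ⟨h1, h2, by nlinarith⟩
  set B : ℝ → ℝ≥0∞ := fun C => ENNReal.ofReal (Real.exp (-(C / 2))) +
      2 * ENNReal.ofReal (Real.exp (3 * |s|)) * gaussianReal 0 1 {w | C / 2 < |w|} with hB
  have hBt : Tendsto B atTop (nhds 0) := gstl_bound_tendsto s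
  have hkey : ∀ C, 2 * |s| ≤ C → ∀ᶠ L : ℕ in atTop, (L : ℝ≥0∞) ^ d *
            ((gaussianReal 0 1).prod (gaussianReal 0 (Real.toNNReal (τ L ^ 2))))
              {p : ℝ × ℝ | a L * Real.sqrt (1 + τ L ^ 2) + s / a L ≤ p.1 + p.2 ∧
                p.1 ∉ gaussiantailInterval τ a C L} ≤ B C := by
    intro C hC
    filter_upwards [hlarge] with L hL
    have h := gstl_core (τ L) (a L) s C (hτ_nonneg L) hL.2.1 hC hL.2.2
    rw [ha_def L hL.1] at h
    rw [← gstl_norm d L hL.1 (B C)]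
    exact mul_le_mul_right h _
  constructor
  · refine le_antisymm ?_ bot_le
    rw [← hBt.limsup_eq]
    refine limsup_le_limsup ?_
    filter_upwards [eventually_ge_atTop (2 * |s|)] with C hC
    exact limsup_le_of_le (by isBoundedDefault) (hkey C hC)
  · intro θ hθ hlim
    rw [ENNReal.tendsto_nhds_zero]
    intro ε hε
    obtain ⟨C, hCε, hC⟩ := ((hBt.eventually (ge_mem_nhds hε)).and
      (eventually_ge_atTop (2 * |s|))).exists
    have hC0 : 0 ≤ C := le_trans (by positivity) hC
    have hsmall := hlim.eventually (gt_mem_nhds (show (0 : ℝ) < 1 / (C + 1) by positivity))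
    filter_upwards [hkey C hC, hsmall, hlarge] with L h1 h2 h3
    refine le_trans ?_ (h1.trans hCε)
    refine mul_le_mul_right (measure_mono ?_) _
    rintro ⟨x, y⟩ ⟨hx, hxθ⟩
    refine ⟨hx, fun hI => ?_⟩
    simp only at hxθ hI
    have ha0 : 0 < a L := by linarith [h3.2.1]
    have hI' : |x - a L / Real.sqrt (1 + τ L ^ 2)| ≤ C * max (1 / a L) (τ L) := by
      rw [abs_le]
      constructor <;> linarith [hI.1, hI.2]
    set r := Real.sqrt (1 + τ L ^ 2) with hr
    set m := max (a L * τ L ^ 2) (1 / a L) with hm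
    have hr1 : 1 ≤ r := Real.one_le_sqrt.2 (by nlinarith [sq_nonneg (τ L)])
    have hr0 : 0 < r := by linarith
    have hr2 : r ^ 2 = 1 + τ L ^ 2 := Real.sq_sqrt (by positivity)
    have hm1 : a L * τ L ^ 2 ≤ m := le_max_left _ _
    have hm2 : 1 / a L ≤ m := le_max_right _ _
    have hm0 : 0 < m := lt_of_lt_of_le (by positivity) hm2
    have hτm : τ L ≤ m := by
      have e : τ L ^ 2 = (a L * τ L ^ 2) * (1 / a L) := by field_simp
      have : τ L ^ 2 ≤ m ^ 2 := by
        rw [e, sq m]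
        exact mul_le_mul hm1 hm2 (by positivity) hm0.le
      exact le_of_sq_le_sq this hm0.le
    have hmax : C * max (1 / a L) (τ L) ≤ C * m := by
      gcongr
      exact max_le hm2 hτm
    have hθm : (C + 1) * m < θ L := by
      rw [div_lt_div_iff₀ (hθ L) (by positivity)] at h2
      linarith
    have hdiff : |a L / r - a L| ≤ a L * τ L ^ 2 := by
      have e1 : a L / r ≤ a L := div_le_self ha0.le hr1
      rw [abs_of_nonpos (by linarith)]
      have e2 : 1 - τ L ^ 2 ≤ 1 / r := by
        rw [le_div_iff₀ hr0]
        nlinarith [sq_nonneg (τ L)]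
      have e3 : a L / r = a L * (1 / r) := by ring
      rw [e3]
      nlinarith
    have := abs_sub_le x (a L / r) (a L)
    linarith

end
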